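/- Assume (K0)–(K3) and let f ∈ L¹(Ω, δ^γ). Then u := 𝒢(f) belongs to L¹_loc(Ω), and it is the unique function u ∈ L¹_loc(Ω) satisfying ∫_Ω u ψ = ∫_Ω f 𝒢(ψ) for every ψ ∈ L∞_c(Ω). Moreover, for every compact K ⊂ Ω, ∫_K |u| ≤ (∫_Ω |f| δ^γ) · ‖δ^{−γ} 𝒢(χ_K)‖_{L∞(Ω)}, and the right-hand side is finite. -/

import Mathlib

/-!
Everything rests on one estimate: for compact `K ⊆ Ω` there is `C` with
`∫_K 𝔾(x,y) dy ≤ C δ(x)^γ` for all `x ∈ Ω` (`exists_potential_bound`). For `y ∈ K` the number `δ(y)`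
lies between two positive constants `c ≤ D`. When `|x-y| ≥ c/2`, the factor
`δ(x)δ(y)/|x-y|²` is at most `δ(x) D/(c/2)²`; when `|x-y| < c/2`, the 1-Lipschitz function `δ`
satisfies `δ(x) ≥ c/2`, so the constant `1` is at most `δ(x)/(c/2)`. Hence
`H(x,y) ≤ C δ(x)^γ |x-y|^{2s-n}`, and the Riesz potential `∫_Ω |x-y|^{2s-n} dy` is bounded on the
bounded set `Ω` because `s > 0`.

Tonelli and the symmetry of `𝔾` then give
`∫_K ∫_Ω 𝔾(x,y)|f(y)| dy dx = ∫_Ω |f| 𝒢(χ_K) ≤ ‖δ^{-γ} 𝒢(χ_K)‖_∞ ∫_Ω |f| δ^γ`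
(`lintegral_kernel_le`), which is the compact estimate, shows `𝒢(f) ∈ L¹_loc`, and provides the
integrability that Fubini's theorem needs for the duality identity. Uniqueness is the fundamental
lemma of the calculus of variations applied to `v - 𝒢(f)`.
-/

open MeasureTheory Metric Set Filter Topology

noncomputable section

abbrev Euc (n : ℕ) : Type := EuclideanSpace ℝ (Fin n)

/-- Distance to the boundary of `Ω`. -/
noncomputable def bdist {n : ℕ} (Ω : Set (Euc n)) (x : Euc n) : ℝ :=
  Metric.infDist x (frontier Ω)

/-- The two-sided model kernel `H(x,y)` of hypothesis (K2). -/
noncomputable def Hker {n : ℕ} (Ω : Set (Euc n)) (s γ : ℝ) (x y : Euc n) : ℝ :=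
  dist x y ^ (2 * s - (n : ℝ)) *
    (min (bdist Ω x * bdist Ω y / dist x y ^ (2 : ℝ)) 1) ^ γ

/-- The Green operator `𝒢(f)(x) = ∫_Ω 𝔾(x,y) f(y) dy` of hypothesis (K0). -/
noncomputable def Gop {n : ℕ} (Ω : Set (Euc n)) (G : Euc n → Euc n → ℝ)
    (f : Euc n → ℝ) (x : Euc n) : ℝ :=
  ∫ y in Ω, G x y * f y

/-- The Riesz potential of order `2s` is bounded on a bounded set. -/
lemma exists_riesz_bound {n : ℕ} (Ω : Set (Euc n)) (s : ℝ) (hΩb : Bornology.IsBounded Ω)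
    (hs0 : 0 < s) (hn : 1 ≤ n) :
    ∃ A : ENNReal, A < ⊤ ∧ ∀ x ∈ Ω,
      ∫⁻ y in Ω, ENNReal.ofReal (dist x y ^ (2 * s - (n : ℝ))) ≤ A := by
  obtain ⟨R, hR⟩ := Metric.isBounded_iff.1 hΩb
  have hmeas : Measurable (fun z : Euc n => ‖z‖ ^ (2 * s - (n : ℝ))) := by fun_prop
  have hint : IntegrableOn (fun z : Euc n => ‖z‖ ^ (2 * s - (n : ℝ))) (ball 0 (R + 1)) := by
    refine integrableOn_ball_of_norm_le_rpow (C := 1) (α := (n : ℝ) - 2 * s) (by simpa using hn)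
      (by simp; linarith) (ae_of_all _ fun z => ?_) hmeas.aestronglyMeasurable
    rw [Real.norm_of_nonneg (by positivity), one_mul, neg_sub]
  refine ⟨∫⁻ z in ball (0 : Euc n) (R + 1), ENNReal.ofReal (‖z‖ ^ (2 * s - (n : ℝ))),
    ?_, fun x hx => ?_⟩
  · have := hint.2
    rw [hasFiniteIntegral_iff_ofReal (ae_of_all _ fun z => by simp only [Pi.zero_apply]; positivity)]
      at this
    exact this
  · rw [← (measurePreserving_sub_right volume x).setLIntegral_comp_preimage measurableSet_ball
      hmeas.ennreal_ofReal]
    simp only [dist_comm x, dist_eq_norm]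
    refine lintegral_mono_set fun y hy => ?_
    rw [mem_preimage, mem_ball_zero_iff, ← dist_eq_norm]
    linarith [hR hy hx]

lemma bdist_pos {n : ℕ} {Ω : Set (Euc n)} (hΩo : IsOpen Ω) (hΩb : Bornology.IsBounded Ω)
    (hn : 1 ≤ n) {x : Euc n} (hx : x ∈ Ω) : 0 < bdist Ω x := by
  have : Nonempty (Fin n) := ⟨⟨0, hn⟩⟩
  have : Nontrivial (Euc n) := inferInstance
  have hne : (frontier Ω).Nonempty := by
    refine nonempty_frontier_iff.2 ⟨⟨x, hx⟩, fun h => ?_⟩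
    exact NormedSpace.unbounded_univ ℝ (Euc n) (h ▸ hΩb)
  refine (isClosed_frontier.notMem_iff_infDist_pos hne).1 fun hxf => ?_
  rw [hΩo.frontier_eq] at hxf
  exact hxf.2 hx

/-- With the second variable confined to a compact subset of `Ω`, the model kernel is at most a
multiple of `δ(x)^γ |x-y|^{2s-n}`, uniformly up to the boundary in `x`. -/
lemma exists_Hker_bound {n : ℕ} {Ω : Set (Euc n)} (s γ : ℝ) (hΩo : IsOpen Ω)
    (hΩb : Bornology.IsBounded Ω) (hγ0 : 0 < γ) (hn : 1 ≤ n) {K : Set (Euc n)}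
    (hK : IsCompact K) (hKΩ : K ⊆ Ω) :
    ∃ C : ℝ, 0 ≤ C ∧ ∀ x ∈ Ω, ∀ y ∈ K, x ≠ y →
      Hker Ω s γ x y ≤ C * bdist Ω x ^ γ * dist x y ^ (2 * s - (n : ℝ)) := by
  rcases K.eq_empty_or_nonempty with rfl | hKne
  · exact ⟨0, le_rfl, by simp⟩
  have hcont : ContinuousOn (bdist Ω) K := (continuous_infDist_pt _).continuousOn
  obtain ⟨y₀, hy₀, hmin⟩ := hK.exists_isMinOn hKne hcont
  obtain ⟨y₁, hy₁, hmax⟩ := hK.exists_isMaxOn hKne hcont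
  have hc : 0 < bdist Ω y₀ := bdist_pos hΩo hΩb hn (hKΩ hy₀)
  have hD : 0 < bdist Ω y₁ := bdist_pos hΩo hΩb hn (hKΩ hy₁)
  set c := bdist Ω y₀
  set D := bdist Ω y₁
  refine ⟨(D / (c / 2) ^ 2 + 1 / (c / 2)) ^ γ, by positivity, fun x hx y hy hxy => ?_⟩
  have hδx := bdist_pos hΩo hΩb hn hx
  have hδy := bdist_pos hΩo hΩb hn (hKΩ hy)
  have hcy : c ≤ bdist Ω y := hmin hy
  have hyD : bdist Ω y ≤ D := hmax hy
  have hd : 0 < dist x y := dist_pos.2 hxy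
  have hbase : min (bdist Ω x * bdist Ω y / dist x y ^ (2 : ℝ)) 1 ≤
      (D / (c / 2) ^ 2 + 1 / (c / 2)) * bdist Ω x := by
    rw [add_mul]
    have h1 : 0 ≤ D / (c / 2) ^ 2 * bdist Ω x := by positivity
    have h2 : 0 ≤ 1 / (c / 2) * bdist Ω x := by positivity
    rcases le_or_gt (c / 2) (dist x y) with h | h
    · refine (min_le_left _ _).trans ?_
      have : bdist Ω x * bdist Ω y / dist x y ^ (2 : ℝ) ≤ D / (c / 2) ^ 2 * bdist Ω x := by
        rw [Real.rpow_two, div_mul_eq_mul_div, mul_comm D]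
        gcongr
      linarith
    · refine (min_le_right _ _).trans ?_
      have hlip : bdist Ω y ≤ bdist Ω x + dist y x := infDist_le_infDist_add_dist
      rw [dist_comm] at hlip
      have : 1 ≤ 1 / (c / 2) * bdist Ω x := by
        rw [div_mul_eq_mul_div, one_mul, le_div_iff₀ (by positivity)]
        linarith
      linarith
  rw [Hker, mul_comm, ← Real.mul_rpow (by positivity) hδx.le]
  gcongr

/-- The boundary estimate `∫_K 𝔾(x,y) dy ≤ C δ(x)^γ`. The diagonal, on which nothing is
assumed about `𝔾`, is a null set because `n ≥ 1`. -/
lemma exists_potential_bound {n : ℕ} {Ω : Set (Euc n)} {s γ Λ : ℝ} {G : Euc n → Euc n → ℝ}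
    (hΩo : IsOpen Ω) (hΩb : Bornology.IsBounded Ω)
    (hs0 : 0 < s) (hγ0 : 0 < γ) (hn : 1 ≤ n) (hΛ : 1 ≤ Λ)
    (hK2 : ∀ x ∈ Ω, ∀ y ∈ Ω, x ≠ y →
      Λ⁻¹ * Hker Ω s γ x y ≤ G x y ∧ G x y ≤ Λ * Hker Ω s γ x y)
    {K : Set (Euc n)} (hK : IsCompact K) (hKΩ : K ⊆ Ω) :
    ∃ C : ℝ, 0 ≤ C ∧ ∀ x ∈ Ω,
      ∫⁻ y in K, ENNReal.ofReal (G x y) ≤ ENNReal.ofReal (C * bdist Ω x ^ γ) := by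
  have : Nonempty (Fin n) := ⟨⟨0, hn⟩⟩
  have : Nontrivial (Euc n) := inferInstance
  obtain ⟨A, hA, hAb⟩ := exists_riesz_bound Ω s hΩb hs0 hn
  obtain ⟨C, hC, hCb⟩ := exists_Hker_bound s γ hΩo hΩb hγ0 hn hK hKΩ
  refine ⟨Λ * C * A.toReal, by positivity, fun x hx => ?_⟩
  have hδx := bdist_pos hΩo hΩb hn hx
  calc ∫⁻ y in K, ENNReal.ofReal (G x y)
      ≤ ∫⁻ y in K, ENNReal.ofReal (Λ * C * bdist Ω x ^ γ) *
          ENNReal.ofReal (dist x y ^ (2 * s - (n : ℝ))) := by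
        refine lintegral_mono_ae ?_
        have hne : ∀ᵐ y ∂(volume.restrict K), y ≠ x := ae_restrict_of_ae (Measure.ae_ne volume x)
        filter_upwards [hne, ae_restrict_mem hK.measurableSet] with y hyx hyK
        rw [← ENNReal.ofReal_mul (by positivity)]
        refine ENNReal.ofReal_le_ofReal ((hK2 x hx y (hKΩ hyK) hyx.symm).2.trans ?_)
        rw [mul_assoc Λ, mul_assoc Λ]
        exact mul_le_mul_of_nonneg_left (hCb x hx y hyK hyx.symm) (by positivity)
    _ = ENNReal.ofReal (Λ * C * bdist Ω x ^ γ) *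
          ∫⁻ y in K, ENNReal.ofReal (dist x y ^ (2 * s - (n : ℝ))) :=
        lintegral_const_mul' _ _ ENNReal.ofReal_ne_top
    _ ≤ ENNReal.ofReal (Λ * C * bdist Ω x ^ γ) * A := by
        gcongr
        exact (lintegral_mono_set hKΩ).trans (hAb x hx)
    _ = ENNReal.ofReal (Λ * C * A.toReal * bdist Ω x ^ γ) := by
        rw [mul_right_comm (Λ * C), ENNReal.ofReal_mul (p := Λ * C * bdist Ω x ^ γ) (by positivity),
          ENNReal.ofReal_toReal hA.ne]

/-- Where the potential of `K` is finite, the Bochner integral `𝒢(χ_K)(x)` is the Lebesgue integral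
`∫_K 𝔾(x,y) dy`. -/
lemma ofReal_Gop_indicator {n : ℕ} {Ω : Set (Euc n)} {G : Euc n → Euc n → ℝ}
    (hGm : Measurable (Function.uncurry G)) (hGpos : ∀ x y, 0 ≤ G x y)
    {K : Set (Euc n)} (hK : MeasurableSet K) (hKΩ : K ⊆ Ω) {x : Euc n}
    (hx : ∫⁻ y in K, ENNReal.ofReal (G x y) ≠ ⊤) :
    0 ≤ Gop Ω G (K.indicator fun _ => 1) x ∧
    ENNReal.ofReal (Gop Ω G (K.indicator fun _ => 1) x) = ∫⁻ y in K, ENNReal.ofReal (G x y) := by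
  have h : Gop Ω G (K.indicator fun _ => 1) x = ∫ y in K, G x y := by
    have : (fun y => G x y * K.indicator (fun _ => (1 : ℝ)) y) = K.indicator (G x) := by
      ext y
      by_cases hy : y ∈ K <;> simp [hy]
    rw [Gop, this, setIntegral_indicator hK, inter_eq_self_of_subset_right hKΩ]
  rw [h, integral_eq_lintegral_of_nonneg_ae (ae_of_all _ (hGpos x))
    (hGm.of_uncurry_left (x := x)).aestronglyMeasurable]
  exact ⟨ENNReal.toReal_nonneg, ENNReal.ofReal_toReal hx⟩

/-- The Tonelli form of the compact estimate. -/
lemma lintegral_kernel_le {n : ℕ} {Ω : Set (Euc n)} {γ : ℝ} {G : Euc n → Euc n → ℝ}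
    (hΩo : IsOpen Ω) (hΩb : Bornology.IsBounded Ω) (hn : 1 ≤ n)
    (hGm : Measurable (Function.uncurry G)) (hGpos : ∀ x y, 0 ≤ G x y)
    (hGsym : ∀ x y, G x y = G y x)
    {f : Euc n → ℝ} (hfm : Measurable f)
    (hf : IntegrableOn (fun x => |f x| * bdist Ω x ^ γ) Ω)
    {K : Set (Euc n)} (hK : IsCompact K) (hKΩ : K ⊆ Ω) {C : ℝ}
    (hC : ∀ x ∈ Ω, ∫⁻ y in K, ENNReal.ofReal (G x y) ≤ ENNReal.ofReal (C * bdist Ω x ^ γ)) :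
    ∫⁻ x in K, ∫⁻ y in Ω, ‖G x y * f y‖ₑ ≤
      ENNReal.ofReal (∫ x in Ω, |f x| * bdist Ω x ^ γ) *
        eLpNorm (fun x => Gop Ω G (K.indicator fun _ => 1) x / bdist Ω x ^ γ) ⊤
          (volume.restrict Ω) := by
  have hGm' : Measurable fun p : Euc n × Euc n => G p.1 p.2 := hGm
  set N := eLpNorm (fun x => Gop Ω G (K.indicator fun _ => 1) x / bdist Ω x ^ γ) ⊤
          (volume.restrict Ω) with hN
  have hmeas : Measurable (Function.uncurry fun x y => ‖G x y * f y‖ₑ) :=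
    (hGm'.mul (hfm.comp measurable_snd)).enorm
  rw [lintegral_lintegral_swap hmeas.aemeasurable,
    ofReal_integral_eq_lintegral_ofReal hf
      (ae_of_all _ fun x => mul_nonneg (abs_nonneg _) (Real.rpow_nonneg infDist_nonneg _)),
    ← lintegral_mul_const _ (by
      have : Measurable (bdist Ω) := (continuous_infDist_pt _).measurable
      fun_prop)]
  have hess : ∀ᵐ y ∂(volume.restrict Ω),
      ‖Gop Ω G (K.indicator fun _ => 1) y / bdist Ω y ^ γ‖ₑ ≤ N := by
    rw [hN, eLpNorm_exponent_top]
    exact ae_le_eLpNormEssSup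
  refine lintegral_mono_ae ?_
  filter_upwards [hess, ae_restrict_mem hΩo.measurableSet] with y hy hyΩ
  have hδ : 0 < bdist Ω y ^ γ := Real.rpow_pos_of_pos (bdist_pos hΩo hΩb hn hyΩ) _
  obtain ⟨hg0, hg⟩ := ofReal_Gop_indicator hGm hGpos hK.measurableSet hKΩ (x := y)
    ((hC y hyΩ).trans_lt ENNReal.ofReal_lt_top).ne
  rw [Real.enorm_of_nonneg (by positivity)] at hy
  calc ∫⁻ x in K, ‖G x y * f y‖ₑ
      = ∫⁻ x in K, ENNReal.ofReal (G y x) * ENNReal.ofReal |f y| := by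
        refine lintegral_congr fun x => ?_
        rw [enorm_mul, Real.enorm_of_nonneg (hGpos x y), hGsym x y, Real.enorm_eq_ofReal_abs]
    _ = ENNReal.ofReal |f y| * ENNReal.ofReal (Gop Ω G (K.indicator fun _ => 1) y) := by
        rw [lintegral_mul_const' _ _ ENNReal.ofReal_ne_top, hg, mul_comm]
    _ = ENNReal.ofReal (|f y| * bdist Ω y ^ γ) *
          ENNReal.ofReal (Gop Ω G (K.indicator fun _ => 1) y / bdist Ω y ^ γ) := by
        rw [← ENNReal.ofReal_mul (by positivity), ← ENNReal.ofReal_mul (by positivity)]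
        congr 1
        field_simp
    _ ≤ ENNReal.ofReal (|f y| * bdist Ω y ^ γ) * N := by gcongr

/-- for `f ∈ L¹(Ω, δ^γ)`, `u = 𝒢(f)` is locally integrable in Ω,
is the unique local-L¹ weak-dual solution, and satisfies the compact estimate. -/
theorem statement2 {n : ℕ} (Ω : Set (Euc n)) (s γ Λ : ℝ) (G : Euc n → Euc n → ℝ)
    (hΩo : IsOpen Ω) (hΩb : Bornology.IsBounded Ω) (hΩne : Ω.Nonempty)
    (hs0 : 0 < s) (hs1 : s ≤ 1) (hγ0 : 0 < γ) (hγ1 : γ ≤ 1) (hsn : 2 * s ≤ (n : ℝ))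
    (hGm : Measurable (Function.uncurry G)) (hGpos : ∀ x y, 0 ≤ G x y)
    (hGsym : ∀ x y, G x y = G y x) (hΛ : 1 ≤ Λ)
    (hK2 : ∀ x ∈ Ω, ∀ y ∈ Ω, x ≠ y →
      Λ⁻¹ * Hker Ω s γ x y ≤ G x y ∧ G x y ≤ Λ * Hker Ω s γ x y)
    (f : Euc n → ℝ) (hfm : Measurable f)
    (hf : IntegrableOn (fun x => |f x| * bdist Ω x ^ γ) Ω) :
    LocallyIntegrableOn (Gop Ω G f) Ω ∧
    (∀ ψ : Euc n → ℝ, Measurable ψ → (∃ M, ∀ x, |ψ x| ≤ M) →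
        IsCompact (tsupport ψ) → tsupport ψ ⊆ Ω →
        ∫ x in Ω, Gop Ω G f x * ψ x = ∫ x in Ω, f x * Gop Ω G ψ x) ∧
    (∀ v : Euc n → ℝ, LocallyIntegrableOn v Ω →
        (∀ ψ : Euc n → ℝ, Measurable ψ → (∃ M, ∀ x, |ψ x| ≤ M) →
          IsCompact (tsupport ψ) → tsupport ψ ⊆ Ω →
          ∫ x in Ω, v x * ψ x = ∫ x in Ω, f x * Gop Ω G ψ x) →
        v =ᵐ[volume.restrict Ω] Gop Ω G f) ∧
    (∀ K : Set (Euc n), IsCompact K → K ⊆ Ω →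
        eLpNorm (fun x => Gop Ω G (K.indicator fun _ => 1) x / bdist Ω x ^ γ) ⊤
            (volume.restrict Ω) < ⊤ ∧
        ENNReal.ofReal (∫ x in K, |Gop Ω G f x|) ≤
          ENNReal.ofReal (∫ x in Ω, |f x| * bdist Ω x ^ γ) *
            eLpNorm (fun x => Gop Ω G (K.indicator fun _ => 1) x / bdist Ω x ^ γ) ⊤
              (volume.restrict Ω)) := by
  have hn : 1 ≤ n := by
    have : (0 : ℝ) < n := by linarith
    exact_mod_cast this
  have hGm' : Measurable fun p : Euc n × Euc n => G p.1 p.2 := hGm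
  have hΩm := hΩo.measurableSet
  have hNfin : ∀ K : Set (Euc n), IsCompact K → K ⊆ Ω →
      eLpNorm (fun x => Gop Ω G (K.indicator fun _ => 1) x / bdist Ω x ^ γ) ⊤
        (volume.restrict Ω) < ⊤ := by
    intro K hK hKΩ
    obtain ⟨C, hC0, hC⟩ := exists_potential_bound hΩo hΩb hs0 hγ0 hn hΛ hK2 hK hKΩ
    rw [eLpNorm_exponent_top]
    refine eLpNormEssSup_lt_top_of_ae_bound (C := C) ?_
    filter_upwards [ae_restrict_mem hΩm] with x hx
    have hδ : 0 < bdist Ω x ^ γ := Real.rpow_pos_of_pos (bdist_pos hΩo hΩb hn hx) _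
    obtain ⟨hg0, hg⟩ := ofReal_Gop_indicator hGm hGpos hK.measurableSet hKΩ (x := x)
      ((hC x hx).trans_lt ENNReal.ofReal_lt_top).ne
    rw [Real.norm_of_nonneg (by positivity), div_le_iff₀ hδ,
      ← ENNReal.ofReal_le_ofReal_iff (by positivity), hg]
    exact hC x hx
  have hker : ∀ K : Set (Euc n), IsCompact K → K ⊆ Ω →
      ∫⁻ x in K, ∫⁻ y in Ω, ‖G x y * f y‖ₑ ≤
        ENNReal.ofReal (∫ x in Ω, |f x| * bdist Ω x ^ γ) *
          eLpNorm (fun x => Gop Ω G (K.indicator fun _ => 1) x / bdist Ω x ^ γ) ⊤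
            (volume.restrict Ω) := by
    intro K hK hKΩ
    obtain ⟨C, hC0, hC⟩ := exists_potential_bound hΩo hΩb hs0 hγ0 hn hΛ hK2 hK hKΩ
    exact lintegral_kernel_le hΩo hΩb hn hGm hGpos hGsym hfm hf hK hKΩ hC
  have hkerm : Measurable fun p : Euc n × Euc n => G p.1 p.2 * f p.2 :=
    hGm'.mul (hfm.comp measurable_snd)
  have hkerint : ∀ K : Set (Euc n), IsCompact K → K ⊆ Ω →
      Integrable (fun p : Euc n × Euc n => G p.1 p.2 * f p.2)
        ((volume.restrict K).prod (volume.restrict Ω)) := by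
    intro K hK hKΩ
    refine ⟨hkerm.aestronglyMeasurable, ?_⟩
    rw [hasFiniteIntegral_iff_enorm, lintegral_prod _ hkerm.enorm.aemeasurable]
    exact (hker K hK hKΩ).trans_lt (ENNReal.mul_lt_top ENNReal.ofReal_lt_top (hNfin K hK hKΩ))
  have huint : ∀ K : Set (Euc n), K ⊆ Ω → IsCompact K → IntegrableOn (Gop Ω G f) K :=
    fun K hKΩ hK => (hkerint K hK hKΩ).integral_prod_left
  have huloc : LocallyIntegrableOn (Gop Ω G f) Ω :=
    (locallyIntegrableOn_iff hΩo.isLocallyClosed).2 huint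
  have hdual : ∀ ψ : Euc n → ℝ, Measurable ψ → (∃ M, ∀ x, |ψ x| ≤ M) →
        IsCompact (tsupport ψ) → tsupport ψ ⊆ Ω →
        ∫ x in Ω, Gop Ω G f x * ψ x = ∫ x in Ω, f x * Gop Ω G ψ x := by
    rintro ψ hψm ⟨M, hM⟩ hψc hψΩ
    set K := tsupport ψ
    have hzero : ∀ x ∉ K, ψ x = 0 := fun x hx => image_eq_zero_of_notMem_tsupport hx
    -- both integrals over `Ω` against `ψ` are integrals over `K = tsupport ψ`
    have hred : ∀ g : Euc n → ℝ, ∫ x in Ω, g x * ψ x = ∫ x in K, g x * ψ x := by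
      intro g
      rw [setIntegral_eq_integral_of_forall_compl_eq_zero
          fun x hx => by rw [hzero x fun h => hx (hψΩ h), mul_zero],
        setIntegral_eq_integral_of_forall_compl_eq_zero fun x hx => by rw [hzero x hx, mul_zero]]
    have hint : Integrable (Function.uncurry fun x y => ψ x * (G x y * f y))
        ((volume.restrict K).prod (volume.restrict Ω)) :=
      (hkerint K hψc hψΩ).bdd_mul (c := M)
        (hψm.comp measurable_fst).aestronglyMeasurable (ae_of_all _ fun p => hM p.1)
    calc ∫ x in Ω, Gop Ω G f x * ψ x
        = ∫ x in K, ∫ y in Ω, ψ x * (G x y * f y) := by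
          rw [hred]
          simp only [Gop, integral_const_mul, mul_comm _ (ψ _)]
      _ = ∫ y in Ω, ∫ x in K, ψ x * (G x y * f y) := integral_integral_swap hint
      _ = ∫ y in Ω, f y * Gop Ω G ψ y := by
          congr 1
          ext y
          rw [Gop, hred, ← integral_const_mul]
          congr 1
          ext x
          rw [hGsym x y]
          ring
  refine ⟨huloc, hdual, fun v hv hvψ => ?_, fun K hK hKΩ => ⟨hNfin K hK hKΩ, ?_⟩⟩
  · have h0 := hΩo.ae_eq_zero_of_integral_contDiff_smul_eq_zero (hv.sub huloc) (by
      intro g hg hgc hgΩ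
      have hzero : ∀ x ∉ tsupport g, g x = 0 := fun x hx => image_eq_zero_of_notMem_tsupport hx
      have hbdd : ∃ M, ∀ x, |g x| ≤ M := hgc.exists_bound_of_continuous hg.continuous
      have hprod : ∀ w : Euc n → ℝ, LocallyIntegrableOn w Ω →
          IntegrableOn (fun x => w x * g x) Ω := by
        intro w hw
        obtain ⟨M, hM⟩ := hbdd
        have h1 : IntegrableOn (fun x => g x * w x) (tsupport g) :=
          (hw.integrableOn_compact_subset hgΩ hgc).bdd_mul (c := M)
            hg.continuous.aestronglyMeasurable (ae_of_all _ hM)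
        simp only [mul_comm (g _)] at h1
        exact h1.of_forall_sdiff_eq_zero hΩm fun x hx => by rw [hzero x hx.2, mul_zero]
      rw [← setIntegral_eq_integral_of_forall_compl_eq_zero (s := Ω)
        fun x hx => by rw [hzero x fun h => hx (hgΩ h), zero_smul]]
      have : ∀ x, g x • (v - Gop Ω G f) x = v x * g x - Gop Ω G f x * g x := by
        intro x
        simp only [Pi.sub_apply, smul_eq_mul]
        ring
      simp only [this]
      rw [integral_sub (hprod v hv) (hprod _ huloc),
        hvψ g hg.continuous.measurable hbdd hgc hgΩ,
        hdual g hg.continuous.measurable hbdd hgc hgΩ, sub_self])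
    filter_upwards [ae_restrict_of_ae h0, ae_restrict_mem hΩm] with x hx hxΩ
    exact sub_eq_zero.1 (hx hxΩ)
  · have := ofReal_integral_norm_eq_lintegral_enorm (huint K hKΩ hK)
    simp only [Real.norm_eq_abs] at this
    rw [this]
    exact (lintegral_mono fun x => enorm_integral_le_lintegral_enorm _).trans (hker K hK hKΩ)
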